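/- (Modified distortion theorem) Let ψ be a Ma-Minda function and let f₀ be the analytic function on 𝔻 with f₀(0) = 0, f₀'(0) = 1, f₀(z) ≠ 0 for z ∈ 𝔻\{0}, and zf₀'(z) = ψ(z)f₀(z) on 𝔻 (since ψ has real Taylor coefficients, f₀ takes real values on (−1,1)). Fix 0 < r < 1 and let m = min_{|z|=r} |ψ(z)| and M = max_{|z|=r} |ψ(z)|. If f ∈ S*(ψ) and |z₀| = r, then m·(−f₀(−r))/r ≤ |f'(z₀)| ≤ (f₀(r)/r)·M, where f₀(−r) and f₀(r) are real numbers. -/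

import Mathlib

open Complex Metric Set

noncomputable section

/-- The open unit disk in `ℂ`. -/
def 𝔻 : Set ℂ := Metric.ball 0 1

/-- The class `𝒜` of analytic functions on `𝔻` normalized by `f 0 = 0`, `f' 0 = 1`. -/
def IsClassA (f : ℂ → ℂ) : Prop :=
  DifferentiableOn ℂ f 𝔻 ∧ f 0 = 0 ∧ deriv f 0 = 1

/-- `g` is subordinate to `F` on the unit disk. -/
def Subordinate (g F : ℂ → ℂ) : Prop :=
  ∃ ω : ℂ → ℂ, DifferentiableOn ℂ ω 𝔻 ∧ ω 0 = 0 ∧ (∀ z ∈ 𝔻, ω z ∈ 𝔻) ∧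
    ∀ z ∈ 𝔻, g z = F (ω z)

/-- `ψ` is a Ma-Minda function: analytic and univalent on `𝔻`, `Re ψ > 0`, `ψ 0 = 1`,
`ψ' 0 > 0`, with real Taylor coefficients (expressed via `ψ (conj z) = conj (ψ z)`). -/
def MaMinda (ψ : ℂ → ℂ) : Prop :=
  DifferentiableOn ℂ ψ 𝔻 ∧ Set.InjOn ψ 𝔻 ∧ (∀ z ∈ 𝔻, 0 < (ψ z).re) ∧
    ψ 0 = 1 ∧ 0 < (deriv ψ 0).re ∧ (deriv ψ 0).im = 0 ∧
    (∀ z ∈ 𝔻, ψ (starRingEnd ℂ z) = starRingEnd ℂ (ψ z))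

/-- The Ma-Minda starlike class `S*(ψ)`. -/
def StarlikeMM (ψ f : ℂ → ℂ) : Prop :=
  IsClassA f ∧ (∀ z ∈ 𝔻, z ≠ 0 → f z ≠ 0) ∧
    Subordinate (fun z => if z = 0 then 1 else z * deriv f z / f z) ψ

/-- The Ma-Minda convex class `C(ψ)`. -/
def ConvexMM (ψ f : ℂ → ℂ) : Prop :=
  IsClassA f ∧ (∀ z ∈ 𝔻, deriv f z ≠ 0) ∧
    Subordinate (fun z => 1 + z * deriv (deriv f) z / deriv f z) ψ

/-- `f` is starlike of order `α`. -/
def StarlikeOrder (α : ℝ) (f : ℂ → ℂ) : Prop :=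
  IsClassA f ∧ (∀ z ∈ 𝔻, z ≠ 0 → f z ≠ 0) ∧
    ∀ z ∈ 𝔻, z ≠ 0 → α < (z * deriv f z / f z).re

/-- `f` is a (normalized) convex function on `𝔻`. -/
def IsConvexFn (f : ℂ → ℂ) : Prop :=
  IsClassA f ∧ (∀ z ∈ 𝔻, deriv f z ≠ 0) ∧
    ∀ z ∈ 𝔻, 0 < (1 + z * deriv (deriv f) z / deriv f z).re

/-!
Where `|f|` is largest on the circle `|z| = ρ`, the tangential derivative of `log |f|` vanishes, so
`z f'(z) / f(z)` is real. Being a value of `ψ` at a point of modulus at most `ρ`, it then lies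
between `ψ(-ρ)` and `ψ(ρ)`, because the univalent `ψ` is real only on the diameter and increases
there. Hence the logarithmic growth rate of `max |f|` is at most that of `f₀`, and likewise for
`min |f|` and `f₀(-ρ)`; integrating gives the growth theorem without any starlikeness of `ψ(𝔻)`.
Since `max |f|` need not be differentiable in `ρ`, the integration is carried out as a maximum
principle for `log |f(z)| - log |f₀(|z|)|`. The distortion bounds follow from
`|f'(z)| = |f(z) / z| |ψ(w)|` with `|w| ≤ |z|` and the maximum and minimum modulus principles for
`ψ`.
-/

section RadialComparison

variable {E : Type*} [NormedAddCommGroup E] [InnerProductSpace ℝ E]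

open scoped RealInnerProductSpace

lemma exists_nonneg_eq_smul_of_inner_le_inner {g x : E} (hx : x ≠ 0)
    (h : ∀ y, ‖y‖ ≤ ‖x‖ → ⟪g, y⟫ ≤ ⟪g, x⟫) : ∃ c : ℝ, 0 ≤ c ∧ g = c • x := by
  have hx' : ‖x‖ ≠ 0 := norm_ne_zero_iff.2 hx
  have cauchy_schwarz_eq : ⟪g, x⟫ = ‖g‖ * ‖x‖ := by
    refine le_antisymm (real_inner_le_norm g x) ?_
    rcases eq_or_ne g 0 with rfl | hg
    · simp
    have hg' : ‖g‖ ≠ 0 := norm_ne_zero_iff.2 hg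
    calc ‖g‖ * ‖x‖ = ⟪g, (‖x‖ / ‖g‖) • g⟫ := by
          rw [real_inner_smul_right, real_inner_self_eq_norm_sq]; field_simp
      _ ≤ ⟪g, x⟫ := h _ <| by simp [norm_smul, hg']
  refine ⟨‖g‖ / ‖x‖, by positivity, ?_⟩
  rw [div_eq_inv_mul, mul_smul, ← inner_eq_norm_mul_iff_real.1 cauchy_schwarz_eq,
    inv_smul_smul₀ hx']

section Gradient

variable [CompleteSpace E]

lemma exists_nonneg_gradient_eq_smul_of_isMaxOn_closedBall {K : E → ℝ} {g x : E} (hx : x ≠ 0)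
    (hK : HasGradientAt K g x) (hmax : IsMaxOn K (closedBall 0 ‖x‖) x) :
    ∃ c : ℝ, 0 ≤ c ∧ g = c • x := by
  refine exists_nonneg_eq_smul_of_inner_le_inner hx fun y hy => ?_
  have hcone : y - x ∈ posTangentConeAt (closedBall 0 ‖x‖) x :=
    sub_mem_posTangentConeAt_of_segment_subset <|
      (convex_closedBall 0 ‖x‖).segment_subset (by simp) (by simpa using hy)
  have hle := hmax.localize.hasFDerivWithinAt_nonpos hK.hasFDerivAt.hasFDerivWithinAt hcone
  rw [InnerProductSpace.toDual_apply_apply, inner_sub_right] at hle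
  linarith

lemma hasGradientAt_comp_norm {v : ℝ → ℝ} {v' : ℝ} {x : E} (hx : x ≠ 0)
    (hv : HasDerivAt v v' ‖x‖) : HasGradientAt (fun y => v ‖y‖) ((v' / ‖x‖) • x) x := by
  have hx' : ‖x‖ ≠ 0 := norm_ne_zero_iff.2 hx
  have hnorm : HasFDerivAt (fun y : E => ‖y‖) (‖x‖⁻¹ • innerSL ℝ x) x := by
    have hsqrt := (hasStrictFDerivAt_norm_sq x).hasFDerivAt.sqrt (pow_ne_zero 2 hx')
    simp only [Real.sqrt_sq (norm_nonneg _)] at hsqrt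
    refine hsqrt.congr_fderiv ?_
    ext y
    simp only [one_div, mul_inv_rev, smul_apply, coe_innerSL_apply, nsmul_eq_mul, Nat.cast_ofNat,
      smul_eq_mul]
    field_simp
  rw [hasGradientAt_iff_hasFDerivAt]
  refine (hv.comp_hasFDerivAt x hnorm).congr_fderiv ?_
  ext y
  simp only [smul_apply, coe_innerSL_apply, smul_eq_mul, map_smul,
    InnerProductSpace.toDual_apply_apply]
  ring

end Gradient

section Comparison

variable [ProperSpace E] {u : E → ℝ} {u' : E → E} {v v' : ℝ → ℝ} {R : ℝ}

lemma le_comp_norm_of_radial_gradient_lt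
    (hu : ∀ x ∈ ball 0 R, HasGradientAt u (u' x) x)
    (hv : ∀ t ∈ Ico 0 R, HasDerivAt v (v' t) t) (h0 : u 0 ≤ v 0)
    (hlt : ∀ x ∈ ball 0 R, x ≠ 0 → ∀ c : ℝ, u' x = c • x → c * ‖x‖ < v' ‖x‖)
    {z : E} (hz : z ∈ ball 0 R) : u z ≤ v ‖z‖ := by
  have hsub : closedBall (0 : E) ‖z‖ ⊆ ball 0 R :=
    closedBall_subset_ball (mem_ball_zero_iff.1 hz)
  have hnorm : MapsTo norm (ball (0 : E) R) (Ico 0 R) :=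
    fun x hx => ⟨norm_nonneg x, mem_ball_zero_iff.1 hx⟩
  have hcont : ContinuousOn (fun x => u x - v ‖x‖) (ball 0 R) :=
    (HasGradientAt.continuousOn hu).sub <|
      (HasDerivAt.continuousOn hv).comp continuous_norm.continuousOn hnorm
  obtain ⟨x, hx, hmax⟩ := (isCompact_closedBall (0 : E) ‖z‖).exists_isMaxOn
    ⟨0, by simp⟩ (hcont.mono hsub)
  suffices x = 0 by
    subst this
    have : u z - v ‖z‖ ≤ u 0 - v ‖(0 : E)‖ := hmax (by simp)
    rw [norm_zero] at this
    linarith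
  by_contra hx0
  have hxR := hsub hx
  have hgrad : HasGradientAt (fun y => u y - v ‖y‖) (u' x - (v' ‖x‖ / ‖x‖) • x) x := by
    rw [hasGradientAt_iff_hasFDerivAt, map_sub]
    exact (hu x hxR).hasFDerivAt.sub (hasGradientAt_comp_norm hx0 (hv _ (hnorm hxR))).hasFDerivAt
  obtain ⟨c, hc, hradial⟩ := exists_nonneg_gradient_eq_smul_of_isMaxOn_closedBall hx0 hgrad
    (hmax.on_subset <| closedBall_subset_closedBall <| mem_closedBall_zero_iff.1 hx)
  have hx' : 0 < ‖x‖ := norm_pos_iff.2 hx0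
  have := hlt x hxR hx0 (c + v' ‖x‖ / ‖x‖) (by rw [add_smul, ← hradial, sub_add_cancel])
  rw [add_mul, div_mul_cancel₀ _ hx'.ne'] at this
  linarith [mul_nonneg hc hx'.le]

theorem le_comp_norm_of_radial_gradient_le
    (hu : ∀ x ∈ ball 0 R, HasGradientAt u (u' x) x)
    (hv : ∀ t ∈ Ico 0 R, HasDerivAt v (v' t) t) (h0 : u 0 ≤ v 0)
    (hle : ∀ x ∈ ball 0 R, x ≠ 0 → ∀ c : ℝ, u' x = c • x → c * ‖x‖ ≤ v' ‖x‖)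
    {z : E} (hz : z ∈ ball 0 R) : u z ≤ v ‖z‖ := by
  have perturbed (ε : ℝ) (hε : 0 < ε) : u z ≤ v ‖z‖ + ε * ‖z‖ :=
    le_comp_norm_of_radial_gradient_lt (v := fun t => v t + ε * t) (v' := fun t => v' t + ε)
      hu (fun t ht => (hv t ht).fun_add (hasDerivAt_const_mul ε)) (by simpa)
      (fun x hx hx0 c hc => (hle x hx hx0 c hc).trans_lt (lt_add_of_pos_right _ hε)) hz
  have hlim : Filter.Tendsto (fun ε : ℝ => v ‖z‖ + ε * ‖z‖) (nhdsWithin 0 (Ioi 0))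
      (nhds (v ‖z‖)) := by
    have : ContinuousAt (fun ε : ℝ => v ‖z‖ + ε * ‖z‖) 0 := by fun_prop
    simpa using this.tendsto.mono_left nhdsWithin_le_nhds
  exact ge_of_tendsto hlim (eventually_mem_nhdsWithin.mono perturbed)

end Comparison

end RadialComparison

lemma logDeriv_fun_inv {𝕜 : Type*} [NontriviallyNormedField 𝕜] {g : 𝕜 → 𝕜} {z : 𝕜}
    (hg : DifferentiableAt 𝕜 g z) :
    logDeriv (fun w => (g w)⁻¹) z = -logDeriv g z := by
  simpa using logDeriv_fun_zpow hg (-1)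

lemma logDeriv_comp_neg {𝕜 : Type*} [NontriviallyNormedField 𝕜] (g : 𝕜 → 𝕜) (z : 𝕜) :
    logDeriv (fun w => g (-w)) z = -logDeriv g (-z) := by
  rw [logDeriv_apply, deriv_comp_neg, neg_div, logDeriv_apply]

lemma hasGradientAt_log_norm {g : ℂ → ℂ} {z : ℂ} (hg : DifferentiableAt ℂ g z) (hz : g z ≠ 0) :
    HasGradientAt (fun w => Real.log ‖g w‖) (starRingEnd ℂ (logDeriv g z)) z := by
  have hz' : ‖g z‖ ^ 2 ≠ 0 := by simpa
  have hlog := ((hg.hasDerivAt.hasFDerivAt.restrictScalars ℝ).norm_sq.log hz').const_mul (1 / 2)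
  have half_log_sq : (fun w => 1 / 2 * Real.log (‖g w‖ ^ 2)) = fun w => Real.log ‖g w‖ := by
    ext w
    rw [Real.log_pow]
    push_cast
    ring
  rw [half_log_sq] at hlog
  rw [hasGradientAt_iff_hasFDerivAt]
  refine hlog.congr_fderiv ?_
  ext y
  simp only [one_div, ← normSq_eq_norm_sq, smul_apply, ContinuousLinearMap.comp_apply,
    ContinuousLinearMap.coe_restrictScalars', ContinuousLinearMap.toSpanSingleton_apply,
    smul_eq_mul, coe_innerSL_apply, Complex.inner, mul_re, conj_re, mul_im, conj_im, mul_neg,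
    sub_neg_eq_add, smul_add, nsmul_eq_mul, Nat.cast_ofNat, logDeriv_apply, map_div₀,
    InnerProductSpace.toDual_apply_apply, RingHomCompTriple.comp_apply, RingHom.id_apply, div_re,
    div_im]
  field_simp
  ring

lemma hasDerivAt_log_norm_ofReal {g : ℂ → ℂ} {t : ℝ} (hg : DifferentiableAt ℂ g t)
    (ht : g t ≠ 0) :
    HasDerivAt (fun s : ℝ => Real.log ‖g s‖) (logDeriv g t).re t := by
  have := (hasGradientAt_log_norm hg ht).hasFDerivAt.comp_hasDerivAt t
    (hasDerivAt_id t).ofReal_comp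
  simpa [Function.comp_def] using this

section NormComparison

variable {g h : ℂ → ℂ} {R : ℝ} {z : ℂ}
  (hg : DifferentiableOn ℂ g (ball 0 R)) (hg_ne : ∀ z ∈ ball 0 R, g z ≠ 0)
  (hh : DifferentiableOn ℂ h (ball 0 R)) (hh_ne : ∀ z ∈ ball 0 R, h z ≠ 0)

include hg hg_ne hh hh_ne

theorem norm_le_of_re_mul_logDeriv_le (h0 : ‖g 0‖ ≤ ‖h 0‖)
    (hle : ∀ z ∈ ball 0 R, z ≠ 0 → (z * logDeriv g z).im = 0 →
      (z * logDeriv g z).re ≤ (‖z‖ * logDeriv h ‖z‖).re) (hz : z ∈ ball 0 R) :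
    ‖g z‖ ≤ ‖h ‖z‖‖ := by
  have norm_mem : ∀ w ∈ ball (0 : ℂ) R, (‖w‖ : ℂ) ∈ ball (0 : ℂ) R := fun w hw => by simpa using hw
  have ofReal_mem : ∀ t ∈ Ico 0 R, (t : ℂ) ∈ ball (0 : ℂ) R := fun t ht => by
    simpa [abs_of_nonneg ht.1] using ht.2
  refine (Real.log_le_log_iff (norm_pos_iff.2 (hg_ne z hz))
    (norm_pos_iff.2 (hh_ne _ (norm_mem z hz)))).1 ?_
  refine le_comp_norm_of_radial_gradient_le (v := fun t => Real.log ‖h t‖)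
    (fun x hx => hasGradientAt_log_norm (hg.differentiableAt (isOpen_ball.mem_nhds hx))
      (hg_ne x hx))
    (fun t ht => hasDerivAt_log_norm_ofReal
      (hh.differentiableAt (isOpen_ball.mem_nhds (ofReal_mem t ht))) (hh_ne t (ofReal_mem t ht)))
    ?_ ?_ hz
  · have := hg_ne 0 (mem_ball_self (pos_of_mem_ball hz))
    simpa using Real.log_le_log (norm_pos_iff.2 this) h0
  · intro x hx hx0 c hc
    have radial : x * logDeriv g x = ((c * ‖x‖ ^ 2 : ℝ) : ℂ) := by
      rw [← Complex.conj_conj (logDeriv g x), hc, Complex.real_smul, map_mul, Complex.conj_ofReal,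
        mul_left_comm, Complex.mul_conj']
      push_cast
      rfl
    have := hle x hx hx0 (by rw [radial, ofReal_im])
    rw [radial, ofReal_re, re_ofReal_mul] at this
    refine le_of_mul_le_mul_left ?_ (norm_pos_iff.2 hx0)
    linarith

theorem le_norm_of_re_mul_logDeriv_le (h0 : ‖h 0‖ ≤ ‖g 0‖)
    (hle : ∀ z ∈ ball 0 R, z ≠ 0 → (z * logDeriv g z).im = 0 →
      (-‖z‖ * logDeriv h (-‖z‖)).re ≤ (z * logDeriv g z).re) (hz : z ∈ ball 0 R) :
    ‖h (-‖z‖)‖ ≤ ‖g z‖ := by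
  have neg_mem : ∀ w ∈ ball (0 : ℂ) R, -w ∈ ball (0 : ℂ) R := fun w hw => by simpa using hw
  have norm_mem : ∀ w ∈ ball (0 : ℂ) R, (‖w‖ : ℂ) ∈ ball (0 : ℂ) R := fun w hw => by simpa using hw
  have hball : (0 : ℂ) ∈ ball 0 R := mem_ball_self (pos_of_mem_ball hz)
  have hinv : ‖(g z)⁻¹‖ ≤ ‖(h (-‖z‖))⁻¹‖ := by
    refine norm_le_of_re_mul_logDeriv_le (g := fun w => (g w)⁻¹) (h := fun w => (h (-w))⁻¹)
      (hg.inv hg_ne) (fun w hw => inv_ne_zero (hg_ne w hw))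
      ((hh.comp (differentiableOn_neg _) neg_mem).inv fun w hw => hh_ne _ (neg_mem w hw))
      (fun w hw => inv_ne_zero (hh_ne _ (neg_mem w hw))) ?_ (fun w hw hw0 him => ?_) hz
    · simpa using inv_anti₀ (norm_pos_iff.2 (hh_ne 0 hball)) h0
    · have hgw := hg.differentiableAt (isOpen_ball.mem_nhds hw)
      have hhw : DifferentiableAt ℂ (fun y => h (-y)) ‖w‖ :=
        (hh.differentiableAt (isOpen_ball.mem_nhds (neg_mem _ (norm_mem w hw)))).comp _
          (by fun_prop)
      rw [logDeriv_fun_inv hgw, mul_neg, neg_im, neg_eq_zero] at him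
      rw [logDeriv_fun_inv hgw, logDeriv_fun_inv hhw, logDeriv_comp_neg, neg_neg, mul_neg, neg_re]
      have := hle w hw hw0 him
      rw [neg_mul, neg_re] at this
      linarith
  rw [norm_inv, norm_inv] at hinv
  exact (inv_le_inv₀ (norm_pos_iff.2 (hg_ne z hz))
    (norm_pos_iff.2 (hh_ne _ (neg_mem _ (norm_mem z hz))))).1 hinv

end NormComparison

lemma strictMonoOn_Ioo_of_injOn_of_hasDerivAt_pos {p : ℝ → ℝ} {a b c p' : ℝ}
    (hp : ContinuousOn p (Ioo a b)) (hinj : InjOn p (Ioo a b)) (hc : c ∈ Ioo a b)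
    (hderiv : HasDerivAt p p' c) (hpos : 0 < p') : StrictMonoOn p (Ioo a b) := by
  refine (hp.strictMonoOn_of_injOn_Ioo (hc.1.trans hc.2) hinj).resolve_right fun hanti => ?_
  have := hanti.antitoneOn.derivWithin_nonpos (x := c)
  rw [derivWithin_of_mem_nhds (isOpen_Ioo.mem_nhds hc), hderiv.deriv] at this
  exact hpos.not_ge this

lemma pos_of_continuousOn_of_ne_zero {X : Type*} [TopologicalSpace X] {s : Set X}
    (hs : IsPreconnected s) {p : X → ℝ} (hp : ContinuousOn p s) (hne : ∀ x ∈ s, p x ≠ 0)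
    {a b : X} (ha : a ∈ s) (hb : b ∈ s) (hpos : 0 < p a) : 0 < p b := by
  by_contra! hle
  obtain ⟨x, hx, hx0⟩ := hs.intermediate_value hb ha hp ⟨hle, hpos.le⟩
  exact hne x hx hx0

theorem le_norm_of_forall_mem_frontier_le_norm {E : Type*} [NormedAddCommGroup E]
    [NormedSpace ℂ E] [Nontrivial E] {f : E → ℂ} {U : Set E} (hU : Bornology.IsBounded U)
    (hd : DiffContOnCl ℂ f U) (hne : ∀ z ∈ closure U, f z ≠ 0) {C : ℝ}
    (hC : ∀ z ∈ frontier U, C ≤ ‖f z‖) {z : E} (hz : z ∈ closure U) : C ≤ ‖f z‖ := by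
  rcases le_or_gt C 0 with hC0 | hC0
  · exact hC0.trans (norm_nonneg _)
  have hinv : ‖f⁻¹ z‖ ≤ C⁻¹ :=
    norm_le_of_forall_mem_frontier_norm_le hU (hd.inv hne)
      (fun w hw => by simpa using inv_anti₀ hC0 (hC w hw)) hz
  rw [Pi.inv_apply, norm_inv] at hinv
  exact (inv_le_inv₀ (norm_pos_iff.2 (hne z hz)) hC0).1 hinv

lemma mem_unitDisk {z : ℂ} : z ∈ 𝔻 ↔ ‖z‖ < 1 := mem_ball_zero_iff

lemma unitDisk_mem_nhds {z : ℂ} (hz : z ∈ 𝔻) : 𝔻 ∈ nhds z := isOpen_ball.mem_nhds hz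

lemma ofReal_mem_unitDisk {x : ℝ} : (x : ℂ) ∈ 𝔻 ↔ x ∈ Ioo (-1) 1 := by
  rw [mem_unitDisk, norm_real, Real.norm_eq_abs, abs_lt, mem_Ioo]

lemma zero_mem_unitDisk : (0 : ℂ) ∈ 𝔻 := mem_ball_self one_pos

theorem Subordinate.exists_norm_le {g F : ℂ → ℂ} (h : Subordinate g F) {z : ℂ} (hz : z ∈ 𝔻) :
    ∃ w, ‖w‖ ≤ ‖z‖ ∧ g z = F w := by
  obtain ⟨ω, hω, hω0, hωD, hgF⟩ := h
  exact ⟨ω z, norm_le_norm_of_mapsTo_ball hω (fun y hy => ball_subset_closedBall (hωD y hy)) hω0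
    (mem_unitDisk.1 hz), hgF z hz⟩

namespace MaMinda

variable {ψ : ℂ → ℂ} (hψ : MaMinda ψ) {w : ℂ}

include hψ

lemma differentiableOn : DifferentiableOn ℂ ψ 𝔻 := hψ.1

lemma injOn : InjOn ψ 𝔻 := hψ.2.1

lemma ne_zero (hw : w ∈ 𝔻) : ψ w ≠ 0 := fun h => by
  simpa [h] using hψ.2.2.1 w hw

lemma deriv_re_pos : 0 < (deriv ψ 0).re := hψ.2.2.2.2.1

lemma map_conj (hw : w ∈ 𝔻) : ψ (starRingEnd ℂ w) = starRingEnd ℂ (ψ w) := hψ.2.2.2.2.2.2 w hw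

lemma im_eq_zero_iff (hw : w ∈ 𝔻) : (ψ w).im = 0 ↔ w.im = 0 := by
  rw [← conj_eq_iff_im, ← conj_eq_iff_im, ← hψ.map_conj hw]
  exact hψ.injOn.eq_iff (mem_unitDisk.2 <| by simpa using mem_unitDisk.1 hw) hw

lemma strictMonoOn_re : StrictMonoOn (fun x : ℝ => (ψ x).re) (Ioo (-1) 1) := by
  have hmaps : MapsTo ((↑) : ℝ → ℂ) (Ioo (-1) 1) 𝔻 := fun x => ofReal_mem_unitDisk.2
  have him : ∀ x ∈ Ioo (-1 : ℝ) 1, (ψ x).im = 0 := fun x hx =>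
    (hψ.im_eq_zero_iff (hmaps hx)).2 (ofReal_im x)
  have hderiv : HasDerivAt ψ (deriv ψ 0) ((0 : ℝ) : ℂ) := by
    simpa using (hψ.differentiableOn.differentiableAt
      (unitDisk_mem_nhds zero_mem_unitDisk)).hasDerivAt
  refine strictMonoOn_Ioo_of_injOn_of_hasDerivAt_pos
    (continuous_re.comp_continuousOn
      (hψ.differentiableOn.continuousOn.comp continuous_ofReal.continuousOn hmaps))
    (fun x hx y hy hxy => ?_) (by norm_num) hderiv.real_of_complex hψ.deriv_re_pos
  exact ofReal_injective <| hψ.injOn (hmaps hx) (hmaps hy) <|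
    Complex.ext hxy ((him x hx).trans (him y hy).symm)

theorem re_mem_Icc_of_im_eq_zero {ρ : ℝ} (hρ : ρ < 1) (hw : ‖w‖ ≤ ρ) (him : (ψ w).im = 0) :
    (ψ w).re ∈ Icc (ψ (-ρ)).re (ψ ρ).re := by
  have hwD : w ∈ 𝔻 := mem_unitDisk.2 (hw.trans_lt hρ)
  obtain ⟨x, rfl⟩ : ∃ x : ℝ, w = x :=
    conj_eq_iff_real.1 (conj_eq_iff_im.2 ((hψ.im_eq_zero_iff hwD).1 him))
  rw [norm_real, Real.norm_eq_abs] at hw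
  obtain ⟨hlow, hupp⟩ := abs_le.1 hw
  have hx : x ∈ Ioo (-1) 1 := ofReal_mem_unitDisk.1 hwD
  have hmono := hψ.strictMonoOn_re.monotoneOn
  rw [← ofReal_neg]
  exact ⟨hmono ⟨by linarith, by linarith [hx.2]⟩ hx hlow,
    hmono hx ⟨by linarith [hx.1], hρ⟩ hupp⟩

theorem norm_mem_Icc_of_norm_le {r m M : ℝ} (hr0 : 0 < r) (hr1 : r < 1)
    (hm : m ∈ lowerBounds ((fun z => ‖ψ z‖) '' sphere 0 r))
    (hM : M ∈ upperBounds ((fun z => ‖ψ z‖) '' sphere 0 r)) (hw : ‖w‖ ≤ r) :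
    ‖ψ w‖ ∈ Icc m M := by
  have hclosure : closure (ball (0 : ℂ) r) = closedBall 0 r := closure_ball 0 hr0.ne'
  have hfrontier : frontier (ball (0 : ℂ) r) = sphere 0 r := frontier_ball 0 hr0.ne'
  have hsub : closure (ball (0 : ℂ) r) ⊆ 𝔻 := hclosure ▸ closedBall_subset_ball hr1
  have hdiff : DiffContOnCl ℂ ψ (ball 0 r) := (hψ.differentiableOn.mono hsub).diffContOnCl
  have hwr : w ∈ closure (ball (0 : ℂ) r) := hclosure ▸ mem_closedBall_zero_iff.2 hw
  refine ⟨le_norm_of_forall_mem_frontier_le_norm isBounded_ball hdiff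
    (fun z hz => hψ.ne_zero (hsub hz)) (fun z hz => hm ⟨z, hfrontier ▸ hz, rfl⟩) hwr, ?_⟩
  exact norm_le_of_forall_mem_frontier_norm_le isBounded_ball hdiff
    (fun z hz => hM ⟨z, hfrontier ▸ hz, rfl⟩) hwr

end MaMinda

namespace IsClassA

variable {f : ℂ → ℂ} {z : ℂ} (hf : IsClassA f)

include hf

lemma map_zero : f 0 = 0 := hf.2.1

lemma dslope_zero : dslope f 0 0 = 1 := by rw [dslope_same, hf.2.2]

lemma differentiableOn_dslope : DifferentiableOn ℂ (dslope f 0) 𝔻 :=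
  (Complex.differentiableOn_dslope (unitDisk_mem_nhds zero_mem_unitDisk)).2 hf.1

lemma eq_mul_dslope (z : ℂ) : f z = z * dslope f 0 z := by
  simpa [hf.map_zero] using (sub_smul_dslope f 0 z).symm

lemma dslope_ne_zero (hne : ∀ z ∈ 𝔻, z ≠ 0 → f z ≠ 0) : ∀ z ∈ 𝔻, dslope f 0 z ≠ 0 := by
  intro z hz h
  rcases eq_or_ne z 0 with rfl | hz0
  · exact one_ne_zero (hf.dslope_zero.symm.trans h)
  · exact hne z hz hz0 (by rw [hf.eq_mul_dslope, h, mul_zero])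

lemma mul_logDeriv_dslope (hz : z ∈ 𝔻) (hz0 : z ≠ 0) (hfz : f z ≠ 0) :
    z * logDeriv (dslope f 0) z = z * logDeriv f z - 1 := by
  have hslope : dslope f 0 z ≠ 0 := right_ne_zero_of_mul (hf.eq_mul_dslope z ▸ hfz)
  have hdiff := hf.differentiableOn_dslope.differentiableAt (unitDisk_mem_nhds hz)
  have : logDeriv f z = 1 / z + logDeriv (dslope f 0) z := by
    conv_lhs => rw [funext hf.eq_mul_dslope]
    rw [logDeriv_mul z hz0 hslope differentiableAt_fun_id hdiff, logDeriv_id']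
  rw [this, mul_add, mul_one_div_cancel hz0, add_sub_cancel_left]

lemma ofReal_re_pos (hne : ∀ z ∈ 𝔻, z ≠ 0 → f z ≠ 0)
    (hreal : ∀ x ∈ Ioo (0 : ℝ) 1, (f x).im = 0) {x : ℝ} (hx : x ∈ Ioo (0 : ℝ) 1) :
    0 < (f x).re := by
  have hmaps : MapsTo ((↑) : ℝ → ℂ) (Ico 0 1) 𝔻 := fun y hy =>
    ofReal_mem_unitDisk.2 ⟨by linarith [hy.1], hy.2⟩
  have hre (y : ℝ) : (f y).re = y * (dslope f 0 y).re := by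
    rw [hf.eq_mul_dslope, re_ofReal_mul]
  have slope_re_zero : (dslope f 0 ((0 : ℝ) : ℂ)).re = 1 := by
    rw [ofReal_zero, hf.dslope_zero, one_re]
  have hslope : 0 < (dslope f 0 x).re := by
    refine pos_of_continuousOn_of_ne_zero isPreconnected_Ico
      (p := fun y : ℝ => (dslope f 0 y).re) (a := 0)
      (continuous_re.comp_continuousOn
        (hf.differentiableOn_dslope.continuousOn.comp continuous_ofReal.continuousOn hmaps))
      (fun y hy h => ?_) (by simp) ⟨hx.1.le, hx.2⟩
      (slope_re_zero.symm ▸ one_pos)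
    rcases hy.1.eq_or_lt with rfl | hy0
    · exact one_ne_zero (slope_re_zero.symm.trans h)
    · refine hne y (hmaps hy) (ofReal_ne_zero.2 hy0.ne') (Complex.ext ?_ (hreal y ⟨hy0, hy.2⟩))
      rw [hre, h, mul_zero, zero_re]
  rw [hre]
  exact mul_pos hx.1 hslope

lemma norm_ofReal_eq_re (hne : ∀ z ∈ 𝔻, z ≠ 0 → f z ≠ 0)
    (hreal : ∀ x ∈ Ioo (0 : ℝ) 1, (f x).im = 0) {x : ℝ} (hx : x ∈ Ioo (0 : ℝ) 1) :
    ‖f x‖ = (f x).re := by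
  have hfx : ((f x).re : ℂ) = f x := Complex.ext (ofReal_re _) (hreal x hx).symm
  rw [← hfx, norm_real, Real.norm_of_nonneg (hf.ofReal_re_pos hne hreal hx).le, ofReal_re]

end IsClassA

/-- The extremal function `f₀` of `S*(ψ)`, characterised by `z f₀'(z) = ψ(z) f₀(z)`; the equation
replaces the integral formula for `f₀`. -/
def IsExtremalMM (ψ f₀ : ℂ → ℂ) : Prop :=
  IsClassA f₀ ∧ (∀ z ∈ 𝔻, z ≠ 0 → f₀ z ≠ 0) ∧ ∀ z ∈ 𝔻, z * deriv f₀ z = ψ z * f₀ z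

lemma IsExtremalMM.mul_logDeriv_eq {ψ f₀ : ℂ → ℂ} (hf₀ : IsExtremalMM ψ f₀) {z : ℂ} (hz : z ∈ 𝔻)
    (hz0 : z ≠ 0) : z * logDeriv f₀ z = ψ z := by
  rw [logDeriv_apply, ← mul_div_assoc, hf₀.2.2 z hz, mul_div_cancel_right₀ _ (hf₀.2.1 z hz hz0)]

lemma IsExtremalMM.mul_logDeriv_dslope {ψ f₀ : ℂ → ℂ} (hf₀ : IsExtremalMM ψ f₀) {z : ℂ}
    (hz : z ∈ 𝔻) (hz0 : z ≠ 0) : z * logDeriv (dslope f₀ 0) z = ψ z - 1 := by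
  rw [hf₀.1.mul_logDeriv_dslope hz hz0 (hf₀.2.1 z hz hz0), hf₀.mul_logDeriv_eq hz hz0]

namespace StarlikeMM

variable {ψ f f₀ : ℂ → ℂ} {z : ℂ}

theorem exists_mul_logDeriv_eq (hf : StarlikeMM ψ f) (hz : z ∈ 𝔻) (hz0 : z ≠ 0) :
    ∃ w, ‖w‖ ≤ ‖z‖ ∧ z * logDeriv f z = ψ w := by
  obtain ⟨w, hw, hψw⟩ := hf.2.2.exists_norm_le hz
  exact ⟨w, hw, by rw [← hψw, if_neg hz0, logDeriv_apply, mul_div_assoc]⟩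

theorem exists_norm_deriv_eq (hf : StarlikeMM ψ f) (hz : z ∈ 𝔻) (hz0 : z ≠ 0) :
    ∃ w, ‖w‖ ≤ ‖z‖ ∧ ‖deriv f z‖ = ‖f z‖ / ‖z‖ * ‖ψ w‖ := by
  obtain ⟨w, hw, hψw⟩ := hf.exists_mul_logDeriv_eq hz hz0
  refine ⟨w, hw, ?_⟩
  have := hf.2.1 z hz hz0
  rw [← hψw, ← norm_div, ← norm_mul, logDeriv_apply]
  congr 1
  field_simp

variable (hψ : MaMinda ψ) (hf : StarlikeMM ψ f) (hf₀ : IsExtremalMM ψ f₀)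

include hψ hf

lemma re_mul_logDeriv_dslope_mem_Icc (hz : z ∈ 𝔻) (hz0 : z ≠ 0)
    (him : (z * logDeriv (dslope f 0) z).im = 0) :
    (z * logDeriv (dslope f 0) z).re ∈ Icc ((ψ (-‖z‖)).re - 1) ((ψ ‖z‖).re - 1) := by
  obtain ⟨w, hw, hψw⟩ := hf.exists_mul_logDeriv_eq hz hz0
  have heq : z * logDeriv (dslope f 0) z = ψ w - 1 := by
    rw [hf.1.mul_logDeriv_dslope hz hz0 (hf.2.1 z hz hz0), hψw]
  have him' : (ψ w).im = 0 := by simpa [heq] using him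
  have := hψ.re_mem_Icc_of_im_eq_zero (mem_unitDisk.1 hz) hw him'
  rw [heq, sub_re, one_re]
  exact ⟨sub_le_sub_right this.1 1, sub_le_sub_right this.2 1⟩

include hf₀

theorem norm_le_norm_extremal (hz : z ∈ 𝔻) : ‖f z‖ ≤ ‖f₀ ‖z‖‖ := by
  have hslope : ‖dslope f 0 z‖ ≤ ‖dslope f₀ 0 ‖z‖‖ :=
    norm_le_of_re_mul_logDeriv_le hf.1.differentiableOn_dslope (hf.1.dslope_ne_zero hf.2.1)
      hf₀.1.differentiableOn_dslope (hf₀.1.dslope_ne_zero hf₀.2.1)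
      (by rw [hf.1.dslope_zero, hf₀.1.dslope_zero])
      (fun x hx hx0 him => by
        rw [hf₀.mul_logDeriv_dslope (by simpa [𝔻] using hx) (by simpa using hx0)]
        exact (hf.re_mul_logDeriv_dslope_mem_Icc hψ hx hx0 him).2) hz
  rw [hf.1.eq_mul_dslope, hf₀.1.eq_mul_dslope, norm_mul, norm_mul, norm_real, norm_norm]
  gcongr

theorem norm_extremal_neg_le_norm (hz : z ∈ 𝔻) : ‖f₀ (-‖z‖)‖ ≤ ‖f z‖ := by
  have hslope : ‖dslope f₀ 0 (-‖z‖)‖ ≤ ‖dslope f 0 z‖ :=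
    le_norm_of_re_mul_logDeriv_le hf.1.differentiableOn_dslope (hf.1.dslope_ne_zero hf.2.1)
      hf₀.1.differentiableOn_dslope (hf₀.1.dslope_ne_zero hf₀.2.1)
      (by rw [hf.1.dslope_zero, hf₀.1.dslope_zero])
      (fun x hx hx0 him => by
        rw [hf₀.mul_logDeriv_dslope (by simpa [𝔻] using hx) (by simpa using hx0)]
        exact (hf.re_mul_logDeriv_dslope_mem_Icc hψ hx hx0 him).1) hz
  rw [hf.1.eq_mul_dslope, hf₀.1.eq_mul_dslope, norm_mul, norm_mul, norm_neg, norm_real, norm_norm]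
  gcongr

end StarlikeMM

theorem stmt17 (ψ f₀ f : ℂ → ℂ) (hψ : MaMinda ψ)
    (hf₀d : DifferentiableOn ℂ f₀ 𝔻) (hf₀0 : f₀ 0 = 0) (hf₀1 : deriv f₀ 0 = 1)
    (hf₀ne : ∀ z ∈ 𝔻, z ≠ 0 → f₀ z ≠ 0)
    (hf₀eq : ∀ z ∈ 𝔻, z * deriv f₀ z = ψ z * f₀ z)
    (hreal : ∀ x : ℝ, |x| < 1 → (f₀ (x:ℂ)).im = 0)
    (r : ℝ) (hr0 : 0 < r) (hr1 : r < 1) (m M : ℝ)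
    (hm : IsLeast ((fun z => ‖ψ z‖) '' Metric.sphere (0:ℂ) r) m)
    (hM : IsGreatest ((fun z => ‖ψ z‖) '' Metric.sphere (0:ℂ) r) M)
    (hf : StarlikeMM ψ f) (z₀ : ℂ) (hz₀ : ‖z₀‖ = r) :
    m * (-(f₀ (-(r:ℂ))).re) / r ≤ ‖deriv f z₀‖ ∧
      ‖deriv f z₀‖ ≤ ((f₀ (r:ℂ)).re / r) * M := by
  subst hz₀
  have hz₀ : z₀ ∈ 𝔻 := mem_unitDisk.2 hr1
  have hf₀ : IsExtremalMM ψ f₀ := ⟨⟨hf₀d, hf₀0, hf₀1⟩, hf₀ne, hf₀eq⟩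
  obtain ⟨w, hw, hderiv⟩ := hf.exists_norm_deriv_eq hz₀ (norm_pos_iff.1 hr0)
  obtain ⟨hmw, hwM⟩ := hψ.norm_mem_Icc_of_norm_le hr0 hr1 hm.2 hM.2 hw
  have hm0 : 0 ≤ m := by
    obtain ⟨y, -, rfl⟩ := hm.1
    exact norm_nonneg _
  have hlower : -(f₀ (-‖z₀‖)).re ≤ ‖f z₀‖ :=
    (neg_le_abs _).trans <| (abs_re_le_norm _).trans <| hf.norm_extremal_neg_le_norm hψ hf₀ hz₀
  have hupper : ‖f z₀‖ ≤ (f₀ ‖z₀‖).re :=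
    (hf.norm_le_norm_extremal hψ hf₀ hz₀).trans_eq <|
      hf₀.1.norm_ofReal_eq_re hf₀ne (fun x hx => hreal x (abs_lt.2 ⟨by linarith [hx.1], hx.2⟩))
        ⟨hr0, hr1⟩
  rw [hderiv, mul_div_assoc, mul_comm m]
  have hupper0 : 0 ≤ (f₀ ‖z₀‖).re / ‖z₀‖ := div_nonneg ((norm_nonneg _).trans hupper) hr0.le
  exact ⟨by gcongr, by gcongr⟩
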